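/- arXiv:1404.7593 — 2 statements merged into one kernel-verified Lean document; each statement's English description precedes it below -/
import Mathlib

section
/- Monotone growth of the particular solution started at M: Let M be a symmetric n×n real matrix such that γ²·I − Bᵀ(R_k(M))B is positive definite for every k ≥ 0 and such that R(M) − M is positive definite. Then for every k ≥ 0 one has R_{k+1}(M) ≥ R_k(M) in the Loewner order, and for every k ≥ 1 the matrix R_k(M) − M is positive definite. -/
open Matrix

/-- The Riccati operator `R(P) = Φ + AᵀPA + AᵀPB(γ²I − BᵀPB)⁻¹BᵀPA`. -/
noncomputable def Ric {n m : ℕ} (A : Matrix (Fin n) (Fin n) ℝ) (B : Matrix (Fin n) (Fin m) ℝ)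
    (Φ : Matrix (Fin n) (Fin n) ℝ) (γ : ℝ) (P : Matrix (Fin n) (Fin n) ℝ) :
    Matrix (Fin n) (Fin n) ℝ :=
  Φ + Aᵀ * P * A +
    Aᵀ * P * B * (γ ^ 2 • (1 : Matrix (Fin m) (Fin m) ℝ) - Bᵀ * P * B)⁻¹ * Bᵀ * P * A

/-!
For a feedback `K`, put `L_K(P) = Φ + (A + BK)ᴴP(A + BK) - KᴴWK`, where `W = γ²I` in the theorem.
Completing the square in `K` gives `R(P) = L_K(P) + (K - K_P)ᴴ(W - BᴴPB)(K - K_P)` with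
`K_P = (W - BᴴPB)⁻¹BᴴPA`, so if `W - BᴴPB` is positive definite, `R(P)` is the maximum of the
`L_K(P)`, attained at `K_P`. Each `L_K` is monotone in `P`, so `P ≤ Q` implies
`R(P) = L_{K_P}(P) ≤ L_{K_P}(Q) ≤ R(Q)`. Applying this repeatedly to `M ≤ R(M)` shows that the
iterates increase.
-/

section FeedbackValue

variable {R l m n : Type*} [Ring R] [StarRing R] [Fintype m] [Fintype n]

/-- The matrix of the quadratic form `x ↦ xᴴΦx - wᴴWw + yᴴPy`, where `w = Kx` is the input produced
by the feedback `K` and `y = Ax + Bw` is the next state. -/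
def feedbackValue (A : Matrix n l R) (B : Matrix n m R) (Φ : Matrix l l R) (W : Matrix m m R)
    (K : Matrix m l R) (P : Matrix n n R) : Matrix l l R :=
  Φ + (A + B * K)ᴴ * P * (A + B * K) - Kᴴ * W * K

theorem posSemidef_feedbackValue_sub [PartialOrder R] [Finite l] {P Q : Matrix n n R}
    (hPQ : (Q - P).PosSemidef) (A : Matrix n l R) (B : Matrix n m R) (Φ : Matrix l l R)
    (W : Matrix m m R) (K : Matrix m l R) :
    (feedbackValue A B Φ W K Q - feedbackValue A B Φ W K P).PosSemidef := by
  have hsub : feedbackValue A B Φ W K Q - feedbackValue A B Φ W K P =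
      (A + B * K)ᴴ * (Q - P) * (A + B * K) := by
    rw [feedbackValue, feedbackValue, Matrix.mul_sub, Matrix.sub_mul]
    abel
  exact hsub ▸ hPQ.conjTranspose_mul_mul_same (A + B * K)

end FeedbackValue

section CompletingTheSquare

variable {R l m n : Type*} [CommRing R] [StarRing R] [Fintype m] [Fintype n] [DecidableEq m]

/-- The Riccati operator with an arbitrary weight `W` in place of `γ²I`. The matrix `A` may be
rectangular, so that the operator goes from `n × n` to `l × l` matrices. -/
noncomputable def riccatiMap (A : Matrix n l R) (B : Matrix n m R) (Φ : Matrix l l R)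
    (W : Matrix m m R) (P : Matrix n n R) : Matrix l l R :=
  Φ + Aᴴ * P * A + Aᴴ * P * B * (W - Bᴴ * P * B)⁻¹ * Bᴴ * P * A

/-- The feedback matrix `K` that maximizes `feedbackValue A B Φ W K P` when `W - BᴴPB` is positive
definite. -/
noncomputable def riccatiGain (A : Matrix n l R) (B : Matrix n m R) (W : Matrix m m R)
    (P : Matrix n n R) : Matrix m l R :=
  (W - Bᴴ * P * B)⁻¹ * (Bᴴ * P * A)

theorem conjTranspose_sub_inv_mul_mul_sub_inv_mul {S : Matrix m m R} (hS : S.IsHermitian)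
    (hSunit : IsUnit S) (K X : Matrix m l R) :
    (K - S⁻¹ * X)ᴴ * S * (K - S⁻¹ * X) = Kᴴ * S * K - Kᴴ * X - Xᴴ * K + Xᴴ * S⁻¹ * X := by
  have hdet : IsUnit S.det := (isUnit_iff_isUnit_det S).1 hSunit
  have left_cancel : (S⁻¹ * X)ᴴ * S = Xᴴ := by
    rw [conjTranspose_mul, hS.inv.eq, nonsing_inv_mul_cancel_right _ _ hdet]
  have right_cancel : Kᴴ * S * (S⁻¹ * X) = Kᴴ * X := by
    rw [Matrix.mul_assoc, mul_nonsing_inv_cancel_left _ _ hdet]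
  rw [conjTranspose_sub, Matrix.sub_mul, left_cancel, Matrix.mul_sub, Matrix.sub_mul,
    Matrix.sub_mul, right_cancel, ← Matrix.mul_assoc Xᴴ]
  abel

variable {A : Matrix n l R} {B : Matrix n m R} {Φ : Matrix l l R} {W : Matrix m m R}
  {P : Matrix n n R}

theorem riccatiMap_eq_feedbackValue_add (hP : P.IsHermitian) (hS : (W - Bᴴ * P * B).IsHermitian)
    (hSunit : IsUnit (W - Bᴴ * P * B)) (K : Matrix m l R) :
    riccatiMap A B Φ W P = feedbackValue A B Φ W K P +
      (K - riccatiGain A B W P)ᴴ * (W - Bᴴ * P * B) * (K - riccatiGain A B W P) := by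
  have hX : (Bᴴ * P * A)ᴴ = Aᴴ * P * B := by
    simp only [conjTranspose_mul, conjTranspose_conjTranspose, hP.eq, Matrix.mul_assoc]
  have hK : Kᴴ * (W - Bᴴ * P * B) * K = Kᴴ * W * K - Kᴴ * Bᴴ * P * B * K := by
    simp only [Matrix.mul_sub, Matrix.sub_mul, Matrix.mul_assoc]
  rw [riccatiGain, conjTranspose_sub_inv_mul_mul_sub_inv_mul hS hSunit, hX, hK, riccatiMap,
    feedbackValue]
  simp only [conjTranspose_add, conjTranspose_mul, Matrix.add_mul, Matrix.mul_add,
    Matrix.mul_assoc]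
  abel

theorem riccatiMap_eq_feedbackValue_riccatiGain (hP : P.IsHermitian)
    (hS : (W - Bᴴ * P * B).IsHermitian) (hSunit : IsUnit (W - Bᴴ * P * B)) :
    riccatiMap A B Φ W P = feedbackValue A B Φ W (riccatiGain A B W P) P := by
  rw [riccatiMap_eq_feedbackValue_add hP hS hSunit (riccatiGain A B W P), sub_self,
    Matrix.mul_zero, add_zero]

end CompletingTheSquare

section Monotonicity

theorem isHermitian_of_posSemidef_sub {R n : Type*} [Ring R] [PartialOrder R] [StarRing R]
    {P Q : Matrix n n R} (hP : P.IsHermitian) (hPQ : (Q - P).PosSemidef) : Q.IsHermitian :=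
  sub_add_cancel Q P ▸ hPQ.isHermitian.add hP

theorem posDef_sub_conjTranspose_mul_mul_of_posSemidef_sub {R m n : Type*} [Ring R]
    [PartialOrder R] [StarRing R] [AddLeftMono R] [Finite m] [Fintype n] {B : Matrix n m R}
    {W : Matrix m m R} {P Q : Matrix n n R} (hPQ : (Q - P).PosSemidef)
    (hSQ : (W - Bᴴ * Q * B).PosDef) : (W - Bᴴ * P * B).PosDef := by
  have hsum := hSQ.add_posSemidef (hPQ.conjTranspose_mul_mul_same B)
  rwa [Matrix.mul_sub, Matrix.sub_mul, sub_add_sub_cancel] at hsum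

variable {𝕜 l m n : Type*} [Field 𝕜] [PartialOrder 𝕜] [StarRing 𝕜] [Fintype m] [DecidableEq m]
  [Fintype n]

theorem posSemidef_riccatiMap_sub_feedbackValue [Finite l] {A : Matrix n l 𝕜} {B : Matrix n m 𝕜}
    {Φ : Matrix l l 𝕜} {W : Matrix m m 𝕜} {P : Matrix n n 𝕜} (hP : P.IsHermitian)
    (hS : (W - Bᴴ * P * B).PosDef) (K : Matrix m l 𝕜) :
    (riccatiMap A B Φ W P - feedbackValue A B Φ W K P).PosSemidef := by
  rw [riccatiMap_eq_feedbackValue_add hP hS.isHermitian hS.isUnit K, add_sub_cancel_left]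
  exact hS.posSemidef.conjTranspose_mul_mul_same (K - riccatiGain A B W P)

variable [AddLeftMono 𝕜]

theorem posSemidef_riccatiMap_sub [Finite l] {A : Matrix n l 𝕜} {B : Matrix n m 𝕜}
    {Φ : Matrix l l 𝕜} {W : Matrix m m 𝕜} {P Q : Matrix n n 𝕜} (hP : P.IsHermitian)
    (hPQ : (Q - P).PosSemidef) (hSQ : (W - Bᴴ * Q * B).PosDef) :
    (riccatiMap A B Φ W Q - riccatiMap A B Φ W P).PosSemidef := by
  have hSP : (W - Bᴴ * P * B).PosDef :=
    posDef_sub_conjTranspose_mul_mul_of_posSemidef_sub hPQ hSQ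
  have hmax := posSemidef_riccatiMap_sub_feedbackValue (A := A) (Φ := Φ)
    (isHermitian_of_posSemidef_sub hP hPQ) hSQ (riccatiGain A B W P)
  have hmono := posSemidef_feedbackValue_sub hPQ A B Φ W (riccatiGain A B W P)
  rw [riccatiMap_eq_feedbackValue_riccatiGain hP hSP.isHermitian hSP.isUnit]
  simpa only [sub_add_sub_cancel] using hmax.add hmono

variable {A Φ M : Matrix n n 𝕜} {B : Matrix n m 𝕜} {W : Matrix m m 𝕜}

theorem isHermitian_and_posSemidef_riccatiMap_iterate_succ_sub (hM : M.IsHermitian)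
    (hS : ∀ k : ℕ, (W - Bᴴ * (riccatiMap A B Φ W)^[k] M * B).PosDef)
    (hRM : (riccatiMap A B Φ W M - M).PosSemidef) (k : ℕ) :
    ((riccatiMap A B Φ W)^[k] M).IsHermitian ∧
      ((riccatiMap A B Φ W)^[k + 1] M - (riccatiMap A B Φ W)^[k] M).PosSemidef := by
  induction k with
  | zero => exact ⟨hM, hRM⟩
  | succ k ih =>
    obtain ⟨hherm, hstep⟩ := ih
    refine ⟨isHermitian_of_posSemidef_sub hherm hstep, ?_⟩
    simpa only [Function.iterate_succ_apply'] using
      posSemidef_riccatiMap_sub (A := A) (Φ := Φ) hherm hstep (hS (k + 1))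

end Monotonicity

theorem posDef_sub_zero_of_posSemidef_succ_sub {R n : Type*} [Ring R] [PartialOrder R] [StarRing R]
    [AddLeftMono R] {u : ℕ → Matrix n n R} (hfirst : (u 1 - u 0).PosDef)
    (hstep : ∀ k, (u (k + 1) - u k).PosSemidef) {k : ℕ} (hk : 1 ≤ k) : (u k - u 0).PosDef := by
  induction k, hk using Nat.le_induction with
  | base => exact hfirst
  | succ k _ ih => simpa only [sub_add_sub_cancel] using ih.posSemidef_add (hstep k)

theorem riccati_iterate_from_M_monotone_general {𝕜 m n : Type*} [Field 𝕜] [PartialOrder 𝕜]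
    [StarRing 𝕜] [AddLeftMono 𝕜] [Fintype m] [DecidableEq m] [Fintype n]
    {A Φ M : Matrix n n 𝕜} {B : Matrix n m 𝕜} {W : Matrix m m 𝕜} (hM : M.IsHermitian)
    (hS : ∀ k : ℕ, (W - Bᴴ * (riccatiMap A B Φ W)^[k] M * B).PosDef)
    (hRM : (riccatiMap A B Φ W M - M).PosDef) :
    (∀ k : ℕ, ((riccatiMap A B Φ W)^[k + 1] M - (riccatiMap A B Φ W)^[k] M).PosSemidef) ∧
      (∀ k : ℕ, 1 ≤ k → ((riccatiMap A B Φ W)^[k] M - M).PosDef) := by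
  have hstep : ∀ k : ℕ,
      ((riccatiMap A B Φ W)^[k + 1] M - (riccatiMap A B Φ W)^[k] M).PosSemidef := fun k ↦
    (isHermitian_and_posSemidef_riccatiMap_iterate_succ_sub hM hS hRM.posSemidef k).2
  exact ⟨hstep, fun k hk ↦
    posDef_sub_zero_of_posSemidef_succ_sub (u := fun k ↦ (riccatiMap A B Φ W)^[k] M) hRM hstep hk⟩

theorem ric_eq_riccatiMap {n m : ℕ} (A : Matrix (Fin n) (Fin n) ℝ) (B : Matrix (Fin n) (Fin m) ℝ)
    (Φ : Matrix (Fin n) (Fin n) ℝ) (γ : ℝ) :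
    Ric A B Φ γ = riccatiMap A B Φ (γ ^ 2 • (1 : Matrix (Fin m) (Fin m) ℝ)) := by
  funext P
  simp only [Ric, riccatiMap, conjTranspose_eq_transpose_of_trivial]

/-- Monotone growth of the particular solution started at `M`. -/
theorem riccati_iterate_from_M_monotone {n m : ℕ}
    (A : Matrix (Fin n) (Fin n) ℝ) (B : Matrix (Fin n) (Fin m) ℝ)
    (Φ : Matrix (Fin n) (Fin n) ℝ) (hΦsymm : Φ.IsSymm) (hΦ : Φ.PosDef)
    (γ : ℝ) (hγ : 0 < γ)
    (M : Matrix (Fin n) (Fin n) ℝ) (hMsymm : M.IsSymm)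
    (hM1 : ∀ k : ℕ,
      (γ ^ 2 • (1 : Matrix (Fin m) (Fin m) ℝ) - Bᵀ * ((Ric A B Φ γ)^[k] M) * B).PosDef)
    (hM2 : (Ric A B Φ γ M - M).PosDef) :
    (∀ k : ℕ, ((Ric A B Φ γ)^[k + 1] M - (Ric A B Φ γ)^[k] M).PosSemidef) ∧
      (∀ k : ℕ, 1 ≤ k → ((Ric A B Φ γ)^[k] M - M).PosDef) := by
  simp only [ric_eq_riccatiMap, ← conjTranspose_eq_transpose_of_trivial] at hM1 hM2 ⊢
  exact riccati_iterate_from_M_monotone_general hMsymm hM1 hM2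
end

section
/- Kernel representation of the dynamic programming evolution operator (Theorem that S_k equals the max-plus integral operator with kernel S_k): Assume M is a symmetric n×n real matrix satisfying: γ²·I − Bᵀ(R_k(M))B is positive definite for all k ≥ 0, R(M) − M is positive definite, and MB(γ²·I − BᵀMB)⁻¹BᵀM is positive definite. Fix k ≥ 1 and suppose the auxiliary value function Ŝ_k(x,z) := (S_k ψ(·,z))(x) is finite for all x,z ∈ ℝⁿ and has the quadratic form Ŝ_k(x,z) = (1/2)[x;z]ᵀQ_k[x;z] for a symmetric 2n×2n matrix Q_k whose lower-right n×n block Q_k²² satisfies Q_k²² − M positive definite. Define the primal kernel S_k(x,y) := −sup_{z∈ℝⁿ} { (1/2)(z−y)ᵀM(z−y) − Ŝ_k(x,z) }. Let P0 be a symmetric n×n matrix with P0 − M positive definite and γ²·I − Bᵀ(R_i(P0))B positive definite for all 0 ≤ i ≤ k−1, and let φ(x) = (1/2)xᵀP0x. Then for every x ∈ ℝⁿ, (S_kφ)(x) = sup_{y∈ℝⁿ} { S_k(x,y) + φ(y) }. -/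
open Matrix

/-- The one-step dynamic programming evolution operator, acting on extended-real-valued
functions so that finiteness of the resulting value functions is a meaningful property:
`(Sφ)(x) = sup_w {½xᵀΦx − (γ²/2)|w|² + φ(Ax+Bw)}`. -/
noncomputable def DP {n m : ℕ} (A : Matrix (Fin n) (Fin n) ℝ) (B : Matrix (Fin n) (Fin m) ℝ)
    (Φ : Matrix (Fin n) (Fin n) ℝ) (γ : ℝ) (φ : (Fin n → ℝ) → EReal) :
    (Fin n → ℝ) → EReal :=
  fun x => ⨆ w : Fin m → ℝ,
    (((1 / 2) * (x ⬝ᵥ Φ *ᵥ x) - γ ^ 2 / 2 * (w ⬝ᵥ w) : ℝ) : EReal) + φ (A *ᵥ x + B *ᵥ w)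

/-- The primal-space kernel `S_k(x,y) = −sup_z {½(z−y)ᵀM(z−y) − Ŝ_k(x,z)}`, expressed
using the quadratic form `Ŝ_k(x,z) = ½[x;z]ᵀQ_k[x;z]` of the auxiliary value function. -/
noncomputable def primalKernel {n : ℕ} (M : Matrix (Fin n) (Fin n) ℝ)
    (Q : Matrix (Fin n ⊕ Fin n) (Fin n ⊕ Fin n) ℝ) (x y : Fin n → ℝ) : ℝ :=
  -(⨆ z : Fin n → ℝ,
      (1 / 2) * ((z - y) ⬝ᵥ M *ᵥ (z - y)) -
        (1 / 2) * (Sum.elim x z ⬝ᵥ Q *ᵥ Sum.elim x z))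

/-!
The kernel `½(y - z)ᵀM(y - z)` generates the quadratics with Hessian at least `M`: since `M` is
invertible, each such quadratic is touched from below, at every point, by a translate of the kernel
plus a constant, hence is a supremum of such translates. The operator `S_k` is max-plus linear, so
writing `φ = sup_e {a(e) + ψ(·, p(e))}` gives `S_kφ(x) = sup_e {a(e) + Ŝ_k(x, p(e))}`. As
`Ŝ_k(x, ·)` is again quadratic with Hessian above `M`, it is recovered from its semiconvex dual,
the primal kernel: `Ŝ_k(x, z) = sup_y {S_k(x, y) + ψ(y, z)}`. Exchanging the two suprema yields
`sup_y {S_k(x, y) + φ(y)}`. The Riccati recursion `S_k(½xᵀPx) = ½xᵀR_k(P)x` shows that this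
supremum is finite.
-/

/-- The quadratic form `½vᵀPv`, the shape shared by the terminal payoffs `φ`, the kernel `ψ` and
the value functions. -/
noncomputable def halfQuad {ι : Type*} [Fintype ι] (P : Matrix ι ι ℝ) (v : ι → ℝ) : ℝ :=
  (1 / 2) * (v ⬝ᵥ P *ᵥ v)

/-- `f` is a quadratic polynomial with Hessian `H`, its linear and constant parts being left free:
semiconvex duality only constrains the Hessian. For non-symmetric `H` the Hessian proper is the
symmetric part of `H`. -/
def IsQuadraticWithHessian {ι : Type*} [Fintype ι] (H : Matrix ι ι ℝ) (f : (ι → ℝ) → ℝ) : Prop :=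
  ∃ (b : ι → ℝ) (c : ℝ), ∀ z, f z = halfQuad H z + z ⬝ᵥ b + c

/-- The semiconvex dual `y ↦ -sup_z {½(z - y)ᵀM(z - y) - f z}` of `f`: up to sign, its max-plus
Legendre transform with respect to the kernel `½(z - y)ᵀM(z - y)`. As for any real supremum, it is
meaningful only where the supremum is finite. -/
noncomputable def semiconvexDual {ι : Type*} [Fintype ι] (M : Matrix ι ι ℝ) (f : (ι → ℝ) → ℝ)
    (y : ι → ℝ) : ℝ :=
  -(⨆ z, halfQuad M (z - y) - f z)

section ERealSuprema

variable {ι : Type*}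

theorem coe_add_iSup_ereal (c : ℝ) (f : ι → EReal) :
    (c : EReal) + ⨆ i, f i = ⨆ i, ((c : EReal) + f i) := by
  have gc : GaloisConnection (fun a : EReal => c + a) (fun a => a - c) := fun a b => by
    rw [EReal.le_sub_iff_add_le (by simp) (by simp), add_comm]
  exact gc.l_iSup

theorem iSup_coe_ereal_eq_of_isGreatest {f : ι → ℝ} {a : ℝ} (h : IsGreatest (Set.range f) a) :
    ⨆ i, (f i : EReal) = a := by
  obtain ⟨⟨i, rfl⟩, hmax⟩ := h
  exact le_antisymm (iSup_le fun j => EReal.coe_le_coe (hmax ⟨j, rfl⟩))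
    (le_iSup (fun j => (f j : EReal)) i)

theorem iSup_coe_ereal_eq_coe_ciSup [Nonempty ι] {f : ι → ℝ} (h : ⨆ i, (f i : EReal) ≠ ⊤) :
    ⨆ i, (f i : EReal) = ((⨆ i, f i : ℝ) : EReal) := by
  have bdd : BddAbove (Set.range f) := by
    obtain ⟨b, hb, -⟩ := EReal.lt_iff_exists_real_btwn.1 h.lt_top
    refine ⟨b, Set.forall_mem_range.2 fun i => ?_⟩
    exact EReal.coe_le_coe_iff.1 ((le_iSup (fun i => (f i : EReal)) i).trans hb.le)
  exact (EReal.coe_strictMono.monotone.map_ciSup_of_continuousAt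
    continuous_coe_real_ereal.continuousAt bdd).symm

end ERealSuprema

section QuadraticForms

variable {ι κ : Type*} [Fintype ι] [Fintype κ]

theorem halfQuad_nonneg {P : Matrix ι ι ℝ} (hP : P.PosSemidef) (v : ι → ℝ) : 0 ≤ halfQuad P v :=
  mul_nonneg (by norm_num) (hP.dotProduct_mulVec_nonneg v)

theorem dotProduct_mulVec_comm_of_isSymm {P : Matrix ι ι ℝ} (hP : P.IsSymm) (v w : ι → ℝ) :
    v ⬝ᵥ P *ᵥ w = w ⬝ᵥ P *ᵥ v := by
  rw [← dotProduct_transpose_mulVec, hP.eq]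

theorem halfQuad_sub_comm (P : Matrix ι ι ℝ) (v w : ι → ℝ) :
    halfQuad P (v - w) = halfQuad P (w - v) := by
  rw [halfQuad, halfQuad, ← neg_sub w v, mulVec_neg, neg_dotProduct_neg]

theorem halfQuad_add {P : Matrix ι ι ℝ} (hP : P.IsSymm) (v w : ι → ℝ) :
    halfQuad P (v + w) = halfQuad P v + v ⬝ᵥ P *ᵥ w + halfQuad P w := by
  simp only [halfQuad, mulVec_add, add_dotProduct, dotProduct_add]
  linarith [dotProduct_mulVec_comm_of_isSymm hP w v]

theorem halfQuad_sub {P : Matrix ι ι ℝ} (hP : P.IsSymm) (v w : ι → ℝ) :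
    halfQuad P (v - w) = halfQuad P v - v ⬝ᵥ P *ᵥ w + halfQuad P w := by
  simp only [halfQuad, mulVec_sub, sub_dotProduct, dotProduct_sub]
  linarith [dotProduct_mulVec_comm_of_isSymm hP w v]

theorem halfQuad_matrix_add (P R : Matrix ι ι ℝ) (v : ι → ℝ) :
    halfQuad (P + R) v = halfQuad P v + halfQuad R v := by
  simp only [halfQuad, add_mulVec, dotProduct_add, mul_add]

theorem halfQuad_matrix_sub (P R : Matrix ι ι ℝ) (v : ι → ℝ) :
    halfQuad (P - R) v = halfQuad P v - halfQuad R v := by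
  simp only [halfQuad, sub_mulVec, dotProduct_sub, mul_sub]

theorem halfQuad_smul_one [DecidableEq ι] (c : ℝ) (v : ι → ℝ) :
    halfQuad (c • (1 : Matrix ι ι ℝ)) v = c / 2 * (v ⬝ᵥ v) := by
  simp only [halfQuad, smul_mulVec, one_mulVec, dotProduct_smul, smul_eq_mul]
  ring

theorem halfQuad_transpose_mul_mul (P : Matrix ι ι ℝ) (C : Matrix ι κ ℝ) (v : κ → ℝ) :
    halfQuad (Cᵀ * P * C) v = halfQuad P (C *ᵥ v) := by
  rw [halfQuad, halfQuad, ← mulVec_mulVec, ← mulVec_mulVec, dotProduct_transpose_mulVec,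
    dotProduct_comm]

theorem halfQuad_inv [DecidableEq ι] {G : Matrix ι ι ℝ} (hG : IsUnit G) (hGsymm : G.IsSymm)
    (v : ι → ℝ) : halfQuad G⁻¹ v = halfQuad G (G⁻¹ *ᵥ v) := by
  rw [← halfQuad_transpose_mul_mul, transpose_nonsing_inv, hGsymm.eq,
    nonsing_inv_mul G ((isUnit_iff_isUnit_det G).1 hG), one_mul]

theorem isGreatest_dotProduct_sub_halfQuad {G : Matrix ι ι ℝ} (hG : G.PosSemidef) (e : ι → ℝ) :
    IsGreatest (Set.range fun w => w ⬝ᵥ G *ᵥ e - halfQuad G w) (halfQuad G e) := by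
  refine ⟨⟨e, by simp only [halfQuad]; ring⟩, Set.forall_mem_range.2 fun w => ?_⟩
  have square_nonneg := halfQuad_nonneg hG (w - e)
  rw [halfQuad_sub (isHermitian_iff_isSymm.1 hG.isHermitian)] at square_nonneg
  linarith

theorem isQuadraticWithHessian_halfQuad (P : Matrix ι ι ℝ) :
    IsQuadraticWithHessian P (halfQuad P) :=
  ⟨0, 0, fun z => by simp⟩

theorem isQuadraticWithHessian_halfQuad_sumElim (Q : Matrix (κ ⊕ ι) (κ ⊕ ι) ℝ) (x : κ → ℝ) :
    IsQuadraticWithHessian Q.toBlocks₂₂ fun z => halfQuad Q (Sum.elim x z) := by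
  refine ⟨(1 / 2 : ℝ) • (Q.toBlocks₂₁ *ᵥ x + Q.toBlocks₁₂ᵀ *ᵥ x), halfQuad Q.toBlocks₁₁ x,
    fun z => ?_⟩
  conv_lhs => rw [← fromBlocks_toBlocks Q]
  simp only [halfQuad, fromBlocks_mulVec, Sum.elim_comp_inl, Sum.elim_comp_inr,
    sumElim_dotProduct_sumElim, dotProduct_add, dotProduct_smul, smul_eq_mul,
    dotProduct_transpose_mulVec]
  ring

end QuadraticForms

section SemiconvexDuality

variable {ι : Type*} [Fintype ι] {M H : Matrix ι ι ℝ} {f : (ι → ℝ) → ℝ}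

theorem isGreatest_halfQuad_sub_of_gradient_eq {b : ι → ℝ} {c : ℝ} (hM : M.IsSymm)
    (hHM : (H - M).PosSemidef) (hf : ∀ z, f z = halfQuad H z + z ⬝ᵥ b + c) {y e : ι → ℝ}
    (hgradient : M *ᵥ (e - y) = H *ᵥ e + b) :
    IsGreatest (Set.range fun z => halfQuad M (z - y) - f z) (halfQuad M (e - y) - f e) := by
  have first_order_condition : (H - M) *ᵥ e = -(M *ᵥ y + b) := by
    rw [mulVec_sub] at hgradient
    rw [sub_mulVec, eq_sub_of_add_eq hgradient.symm]
    abel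
  have complete_square (z : ι → ℝ) : halfQuad M (z - y) - f z =
      z ⬝ᵥ (H - M) *ᵥ e - halfQuad (H - M) z + (halfQuad M y - c) := by
    rw [first_order_condition, hf, halfQuad_sub hM, halfQuad_matrix_sub, dotProduct_neg,
      dotProduct_add]
    ring
  refine ⟨⟨e, rfl⟩, Set.forall_mem_range.2 fun z => ?_⟩
  have upper := (isGreatest_dotProduct_sub_halfQuad hHM e).2 ⟨z, rfl⟩
  have attained : e ⬝ᵥ (H - M) *ᵥ e = 2 * halfQuad (H - M) e := by
    rw [halfQuad]
    ring
  rw [complete_square, complete_square, attained]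
  linarith

theorem bddAbove_range_halfQuad_sub (hM : M.IsSymm) (hHM : (H - M).PosDef)
    (hf : IsQuadraticWithHessian H f) (y : ι → ℝ) :
    BddAbove (Set.range fun z => halfQuad M (z - y) - f z) := by
  classical
  obtain ⟨b, c, hf⟩ := hf
  obtain ⟨e, he⟩ := mulVec_surjective_iff_isUnit.2 hHM.isUnit (-(M *ᵥ y + b))
  refine (isGreatest_halfQuad_sub_of_gradient_eq hM hHM.posSemidef hf ?_ : IsGreatest _
    (halfQuad M (e - y) - f e)).bddAbove
  rw [sub_mulVec, sub_eq_iff_eq_add] at he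
  rw [he, mulVec_sub]
  abel

variable [DecidableEq ι]

theorem exists_center_isGreatest_halfQuad_sub (hM : M.IsSymm) (hMunit : IsUnit M)
    (hHM : (H - M).PosSemidef) (hf : IsQuadraticWithHessian H f) (e : ι → ℝ) :
    ∃ y, IsGreatest (Set.range fun z => halfQuad M (z - y) - f z) (halfQuad M (e - y) - f e) := by
  obtain ⟨b, c, hf⟩ := hf
  obtain ⟨d, hd⟩ := mulVec_surjective_iff_isUnit.2 hMunit (H *ᵥ e + b)
  exact ⟨e - d, isGreatest_halfQuad_sub_of_gradient_eq hM hHM hf (by rw [sub_sub_cancel, hd])⟩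

theorem coe_eq_iSup_semiconvexDual_add_halfQuad (hM : M.IsSymm) (hMunit : IsUnit M)
    (hHM : (H - M).PosDef) (hf : IsQuadraticWithHessian H f) (z : ι → ℝ) :
    (f z : EReal) = ⨆ y, ((semiconvexDual M f y + halfQuad M (z - y) : ℝ) : EReal) := by
  refine (iSup_coe_ereal_eq_of_isGreatest ⟨?_, Set.forall_mem_range.2 fun y => ?_⟩).symm
  · obtain ⟨y, hy⟩ := exists_center_isGreatest_halfQuad_sub hM hMunit hHM.posSemidef hf z
    have dual_eq : semiconvexDual M f y = -(halfQuad M (z - y) - f z) := by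
      rw [semiconvexDual, iSup, hy.csSup_eq]
    exact ⟨y, by simp only [dual_eq]; ring⟩
  · have le_supremum := le_ciSup (bddAbove_range_halfQuad_sub hM hHM hf y) z
    rw [semiconvexDual]
    linarith

theorem exists_coe_eq_iSup_add_halfQuad (hM : M.IsSymm) (hMunit : IsUnit M)
    (hHM : (H - M).PosSemidef) (hf : IsQuadraticWithHessian H f) :
    ∃ (a : (ι → ℝ) → ℝ) (p : (ι → ℝ) → ι → ℝ), ∀ z,
      (f z : EReal) = ⨆ e, ((a e + halfQuad M (z - p e) : ℝ) : EReal) := by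
  choose p hp using exists_center_isGreatest_halfQuad_sub hM hMunit hHM hf
  refine ⟨fun e => f e - halfQuad M (e - p e), p, fun z => ?_⟩
  refine (iSup_coe_ereal_eq_of_isGreatest
    ⟨⟨z, sub_add_cancel _ _⟩, Set.forall_mem_range.2 fun e => ?_⟩).symm
  linarith [(hp e).2 ⟨z, rfl⟩]

end SemiconvexDuality

section DynamicProgramming

variable {n m : ℕ} (A : Matrix (Fin n) (Fin n) ℝ) (B : Matrix (Fin n) (Fin m) ℝ)
  (Φ : Matrix (Fin n) (Fin n) ℝ) (γ : ℝ)

theorem DP_iSup_coe_add {ι : Type*} (a : ι → ℝ) (f : ι → (Fin n → ℝ) → EReal) :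
    DP A B Φ γ (fun x => ⨆ i, ((a i : EReal) + f i x)) =
      fun x => ⨆ i, ((a i : EReal) + DP A B Φ γ (f i) x) := by
  funext x
  simp only [DP, coe_add_iSup_ereal]
  rw [iSup_comm]
  exact iSup_congr fun i => iSup_congr fun w => add_left_comm _ _ _

theorem DP_iterate_iSup_coe_add {ι : Type*} (a : ι → ℝ) (f : ι → (Fin n → ℝ) → EReal) (k : ℕ) :
    (DP A B Φ γ)^[k] (fun x => ⨆ i, ((a i : EReal) + f i x)) =
      fun x => ⨆ i, ((a i : EReal) + (DP A B Φ γ)^[k] (f i) x) := by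
  induction k generalizing f with
  | zero => rfl
  | succ k ih => simp only [Function.iterate_succ_apply, DP_iSup_coe_add, ih]

theorem isSymm_Ric {Φ P : Matrix (Fin n) (Fin n) ℝ} (hΦ : Φ.IsSymm) (hP : P.IsSymm) :
    (Ric A B Φ γ P).IsSymm := by
  simp only [Ric, IsSymm, transpose_add, transpose_mul, transpose_nonsing_inv, transpose_sub,
    transpose_smul, transpose_one, transpose_transpose, hP.eq, hΦ.eq, Matrix.mul_assoc]

theorem halfQuad_Ric {P : Matrix (Fin n) (Fin n) ℝ} (hP : P.IsSymm)
    (hG : (γ ^ 2 • (1 : Matrix (Fin m) (Fin m) ℝ) - Bᵀ * P * B).PosDef) (x : Fin n → ℝ) :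
    halfQuad (Ric A B Φ γ P) x = halfQuad Φ x + halfQuad P (A *ᵥ x) +
      halfQuad (γ ^ 2 • (1 : Matrix (Fin m) (Fin m) ℝ) - Bᵀ * P * B)
        ((γ ^ 2 • (1 : Matrix (Fin m) (Fin m) ℝ) - Bᵀ * P * B)⁻¹ *ᵥ (Bᵀ * P * A) *ᵥ x) := by
  have feedback_term (K : Matrix (Fin m) (Fin m) ℝ) :
      Aᵀ * P * B * K * Bᵀ * P * A = (Bᵀ * P * A)ᵀ * K * (Bᵀ * P * A) := by
    simp only [transpose_mul, transpose_transpose, hP.eq, Matrix.mul_assoc]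
  rw [Ric, halfQuad_matrix_add, halfQuad_matrix_add, feedback_term, halfQuad_transpose_mul_mul,
    halfQuad_transpose_mul_mul, halfQuad_inv hG.isUnit (isHermitian_iff_isSymm.1 hG.isHermitian)]

theorem stage_payoff_eq_dotProduct_sub_halfQuad {P : Matrix (Fin n) (Fin n) ℝ} (hP : P.IsSymm)
    (x : Fin n → ℝ) (w : Fin m → ℝ) :
    halfQuad Φ x - γ ^ 2 / 2 * (w ⬝ᵥ w) + halfQuad P (A *ᵥ x + B *ᵥ w) =
      halfQuad Φ x + halfQuad P (A *ᵥ x) + (w ⬝ᵥ (Bᵀ * P * A) *ᵥ x -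
        halfQuad (γ ^ 2 • (1 : Matrix (Fin m) (Fin m) ℝ) - Bᵀ * P * B) w) := by
  have cross_term : (A *ᵥ x) ⬝ᵥ P *ᵥ (B *ᵥ w) = w ⬝ᵥ (Bᵀ * P * A) *ᵥ x := by
    rw [← mulVec_mulVec, ← mulVec_mulVec, dotProduct_transpose_mulVec, dotProduct_comm (P *ᵥ _),
      dotProduct_mulVec_comm_of_isSymm hP]
  rw [halfQuad_add hP, cross_term, halfQuad_matrix_sub, halfQuad_smul_one,
    halfQuad_transpose_mul_mul]
  ring

theorem DP_halfQuad {P : Matrix (Fin n) (Fin n) ℝ} (hP : P.IsSymm)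
    (hG : (γ ^ 2 • (1 : Matrix (Fin m) (Fin m) ℝ) - Bᵀ * P * B).PosDef) :
    DP A B Φ γ (fun y => (halfQuad P y : EReal)) =
      fun y => (halfQuad (Ric A B Φ γ P) y : EReal) := by
  funext x
  rw [halfQuad_Ric A B Φ γ hP hG]
  set G := γ ^ 2 • (1 : Matrix (Fin m) (Fin m) ℝ) - Bᵀ * P * B
  have maximum := isGreatest_dotProduct_sub_halfQuad hG.posSemidef (G⁻¹ *ᵥ (Bᵀ * P * A) *ᵥ x)
  rw [mulVec_mulVec _ G, mul_nonsing_inv G ((isUnit_iff_isUnit_det G).1 hG.isUnit),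
    one_mulVec] at maximum
  rw [EReal.coe_add, ← iSup_coe_ereal_eq_of_isGreatest maximum, coe_add_iSup_ereal]
  refine iSup_congr fun w => ?_
  rw [← EReal.coe_add, ← EReal.coe_add, ← stage_payoff_eq_dotProduct_sub_halfQuad A B Φ γ hP]
  rfl

theorem DP_iterate_halfQuad {Φ : Matrix (Fin n) (Fin n) ℝ} (hΦ : Φ.IsSymm) (k : ℕ)
    {P : Matrix (Fin n) (Fin n) ℝ} (hP : P.IsSymm)
    (hG : ∀ i < k,
      (γ ^ 2 • (1 : Matrix (Fin m) (Fin m) ℝ) - Bᵀ * ((Ric A B Φ γ)^[i] P) * B).PosDef) :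
    (DP A B Φ γ)^[k] (fun y => (halfQuad P y : EReal)) =
      fun y => (halfQuad ((Ric A B Φ γ)^[k] P) y : EReal) := by
  induction k generalizing P with
  | zero => rfl
  | succ k ih =>
    rw [Function.iterate_succ_apply, Function.iterate_succ_apply,
      DP_halfQuad A B Φ γ hP (hG 0 k.succ_pos)]
    exact ih (isSymm_Ric A B γ hΦ hP) fun i hi => hG (i + 1) (Nat.succ_lt_succ hi)

theorem primalKernel_eq_semiconvexDual (M : Matrix (Fin n) (Fin n) ℝ)
    (Q : Matrix (Fin n ⊕ Fin n) (Fin n ⊕ Fin n) ℝ) (x : Fin n → ℝ) :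
    primalKernel M Q x = semiconvexDual M fun z => halfQuad Q (Sum.elim x z) :=
  rfl

theorem DP_iterate_eq_iSup_primalKernel_add {M P : Matrix (Fin n) (Fin n) ℝ}
    {φ : (Fin n → ℝ) → ℝ} {Q : Matrix (Fin n ⊕ Fin n) (Fin n ⊕ Fin n) ℝ} {k : ℕ} {x : Fin n → ℝ}
    (hM : M.IsSymm) (hMunit : IsUnit M)
    (hQ : ∀ z, (DP A B Φ γ)^[k] (fun x' => (halfQuad M (x' - z) : EReal)) x =
      (halfQuad Q (Sum.elim x z) : EReal))
    (hQM : (Q.toBlocks₂₂ - M).PosDef) (hφ : IsQuadraticWithHessian P φ)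
    (hPM : (P - M).PosSemidef) :
    (DP A B Φ γ)^[k] (fun y => (φ y : EReal)) x =
      ⨆ y, ((primalKernel M Q x y + φ y : ℝ) : EReal) := by
  obtain ⟨a, p, φ_eq_iSup⟩ := exists_coe_eq_iSup_add_halfQuad hM hMunit hPM hφ
  have kernel_eq_iSup (z : Fin n → ℝ) : (halfQuad Q (Sum.elim x z) : EReal) =
      ⨆ y, ((primalKernel M Q x y + halfQuad M (z - y) : ℝ) : EReal) := by
    rw [primalKernel_eq_semiconvexDual]
    exact coe_eq_iSup_semiconvexDual_add_halfQuad hM hMunit hQM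
      (isQuadraticWithHessian_halfQuad_sumElim Q x) z
  calc (DP A B Φ γ)^[k] (fun y => (φ y : EReal)) x
    _ = ⨆ e, ((a e : EReal) + (halfQuad Q (Sum.elim x (p e)) : EReal)) := by
        simp only [φ_eq_iSup, EReal.coe_add, DP_iterate_iSup_coe_add, hQ]
    _ = ⨆ e, ⨆ y, ((a e : EReal) + (primalKernel M Q x y + halfQuad M (p e - y) : ℝ)) := by
        simp only [kernel_eq_iSup, coe_add_iSup_ereal]
    _ = ⨆ y, ⨆ e, ((primalKernel M Q x y : EReal) + (a e + halfQuad M (y - p e) : ℝ)) := by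
        rw [iSup_comm]
        simp only [EReal.coe_add, halfQuad_sub_comm M (p _), add_left_comm]
    _ = ⨆ y, ((primalKernel M Q x y + φ y : ℝ) : EReal) := by
        simp only [← coe_add_iSup_ereal, φ_eq_iSup, EReal.coe_add (primalKernel M Q x _)]

theorem dp_operator_kernel_representation_general {M P : Matrix (Fin n) (Fin n) ℝ}
    {φ : (Fin n → ℝ) → ℝ} {Q : Matrix (Fin n ⊕ Fin n) (Fin n ⊕ Fin n) ℝ} {k : ℕ} {x : Fin n → ℝ}
    (hM : M.IsSymm) (hMunit : IsUnit M)
    (hQ : ∀ z, (DP A B Φ γ)^[k] (fun x' => (halfQuad M (x' - z) : EReal)) x =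
      (halfQuad Q (Sum.elim x z) : EReal))
    (hQM : (Q.toBlocks₂₂ - M).PosDef) (hφ : IsQuadraticWithHessian P φ)
    (hPM : (P - M).PosSemidef)
    (hfinite : (DP A B Φ γ)^[k] (fun y => (φ y : EReal)) x ≠ ⊤) :
    (DP A B Φ γ)^[k] (fun y => (φ y : EReal)) x =
      ((⨆ y, primalKernel M Q x y + φ y : ℝ) : EReal) := by
  have representation := DP_iterate_eq_iSup_primalKernel_add A B Φ γ hM hMunit hQ hQM hφ hPM
  rw [representation] at hfinite ⊢
  exact iSup_coe_ereal_eq_coe_ciSup hfinite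

end DynamicProgramming

/-- Kernel representation of the dynamic programming evolution operator:
`(S_kφ)(x) = sup_y {S_k(x,y) + φ(y)}` for quadratic `φ(y) = ½yᵀP₀y` with `P₀ > M`. -/
theorem dp_operator_kernel_representation {n m : ℕ}
    (A : Matrix (Fin n) (Fin n) ℝ) (B : Matrix (Fin n) (Fin m) ℝ)
    (Φ : Matrix (Fin n) (Fin n) ℝ) (hΦsymm : Φ.IsSymm) (hΦ : Φ.PosDef)
    (γ : ℝ) (hγ : 0 < γ)
    (M : Matrix (Fin n) (Fin n) ℝ) (hMsymm : M.IsSymm)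
    (hM1 : ∀ k : ℕ,
      (γ ^ 2 • (1 : Matrix (Fin m) (Fin m) ℝ) - Bᵀ * ((Ric A B Φ γ)^[k] M) * B).PosDef)
    (hM2 : (Ric A B Φ γ M - M).PosDef)
    (hM3 : (M * B * (γ ^ 2 • (1 : Matrix (Fin m) (Fin m) ℝ) - Bᵀ * M * B)⁻¹ * Bᵀ * M).PosDef)
    (k : ℕ) (hk : 1 ≤ k)
    (Q : Matrix (Fin n ⊕ Fin n) (Fin n ⊕ Fin n) ℝ) (hQsymm : Q.IsSymm)
    -- `Ŝ_k` is finite and quadratic with Hessian `Q`: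
    (hQ : ∀ x z : Fin n → ℝ,
      (DP A B Φ γ)^[k]
          (fun x' => (((1 / 2) * ((x' - z) ⬝ᵥ M *ᵥ (x' - z)) : ℝ) : EReal)) x =
        (((1 / 2) * (Sum.elim x z ⬝ᵥ Q *ᵥ Sum.elim x z) : ℝ) : EReal))
    (hQ22 : (Q.toBlocks₂₂ - M).PosDef)
    (P₀ : Matrix (Fin n) (Fin n) ℝ) (hP₀symm : P₀.IsSymm) (hP₀M : (P₀ - M).PosDef)
    (hP₀ : ∀ i < k,
      (γ ^ 2 • (1 : Matrix (Fin m) (Fin m) ℝ) - Bᵀ * ((Ric A B Φ γ)^[i] P₀) * B).PosDef)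
    (x : Fin n → ℝ) :
    (DP A B Φ γ)^[k] (fun y => (((1 / 2) * (y ⬝ᵥ P₀ *ᵥ y) : ℝ) : EReal)) x =
      ((⨆ y : Fin n → ℝ,
          primalKernel M Q x y + (1 / 2) * (y ⬝ᵥ P₀ *ᵥ y) : ℝ) : EReal) := by
  have hMunit : IsUnit M := isUnit_of_mul_isUnit_right hM3.isUnit
  have hfinite : (DP A B Φ γ)^[k] (fun y => (halfQuad P₀ y : EReal)) x ≠ ⊤ := by
    rw [DP_iterate_halfQuad A B γ hΦsymm k hP₀symm hP₀]
    exact EReal.coe_ne_top _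
  exact dp_operator_kernel_representation_general A B Φ γ hMsymm hMunit (hQ x)
    hQ22 (isQuadraticWithHessian_halfQuad P₀) hP₀M.posSemidef hfinite
end
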